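/- For odd n ≥ 3, Player 1 has a winning strategy for REL(Dic_n, {a,x}), where Dic_n = ⟨a,x | a^{2n} = x^4 = x^{-1}axa = e⟩. -/

import Mathlib

namespace RelatorGames

variable {G : Type*} [Group G]

/-- The letters available in the relator games: elements of `S` and their inverses. -/
def letters (S : Set G) : Set G := S ∪ (fun g => g⁻¹) '' S

/-- Evaluate a history of moves (most recent letter first) to a group element:
the group element represented by the word built so far. -/
def eval (h : List G) : G := h.reverse.prod

/-- A move `m` is legal after history `h`: it is a letter of `S ∪ S⁻¹` and it is not
the inverse of the immediately preceding letter (no backtracking). -/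
def LegalMove (S : Set G) (h : List G) (m : G) : Prop :=
  m ∈ letters S ∧ ∀ p ∈ h.head?, m ≠ p⁻¹

/-- Appending `m` to the history `h` produces a word equal in `G` to some earlier
prefix of the word (equivalently, the walk in the Cayley graph revisits a vertex). -/
def ClosesCycle (h : List G) (m : G) : Prop :=
  ∃ t, t <:+ h ∧ eval t = eval (m :: h)

/-- A strategy: a choice of next letter given the history (most recent letter first). -/
abbrev Strategy (G : Type*) := List G → G

/-- The sequence of histories arising when the first player (moving at even steps)
uses `σ` and the second player (moving at odd steps) uses `τ`. -/
def hist (σ τ : Strategy G) : ℕ → List G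
  | 0 => []
  | k + 1 =>
      (if k % 2 = 0 then σ (hist σ τ k) else τ (hist σ τ k)) :: hist σ τ k

/-- The move made at step `k` in the play of `σ` against `τ`. -/
def moveAt (σ τ : Strategy G) (k : ℕ) : G :=
  if k % 2 = 0 then σ (hist σ τ k) else τ (hist σ τ k)

/-- Step `j` is uneventful: the move made is legal and does not close a cycle. -/
def Ok (S : Set G) (σ τ : Strategy G) (j : ℕ) : Prop :=
  LegalMove S (hist σ τ j) (moveAt σ τ j) ∧ ¬ ClosesCycle (hist σ τ j) (moveAt σ τ j)

/-- In the play of `σ` against `τ`, the player moving at steps congruent to `p` mod 2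
wins the relator achievement game `REL(G,S)`: at the first eventful step, either it is
that player's turn and they legally close a cycle, or it is the opponent's turn and the
opponent has made an illegal move (in particular, has no legal move). -/
def RelWins (S : Set G) (p : ℕ) (σ τ : Strategy G) : Prop :=
  ∃ k : ℕ, (∀ j < k, Ok S σ τ j) ∧
    ((k % 2 = p ∧ LegalMove S (hist σ τ k) (moveAt σ τ k) ∧
        ClosesCycle (hist σ τ k) (moveAt σ τ k)) ∨
      (k % 2 ≠ p ∧ ¬ LegalMove S (hist σ τ k) (moveAt σ τ k)))

/-- In the play of `σ` against `τ`, the player moving at steps congruent to `p` mod 2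
wins the relator avoidance game `RAV(G,S)`: at the first eventful step it is the
opponent's turn, and the opponent either makes an illegal move (in particular, has no
legal move) or closes a cycle. -/
def RavWins (S : Set G) (p : ℕ) (σ τ : Strategy G) : Prop :=
  ∃ k : ℕ, (∀ j < k, Ok S σ τ j) ∧ k % 2 ≠ p ∧
    (¬ LegalMove S (hist σ τ k) (moveAt σ τ k) ∨ ClosesCycle (hist σ τ k) (moveAt σ τ k))

/-- Player 1 has a winning strategy for `REL(G,S)`. -/
def FirstWinsREL (S : Set G) : Prop :=
  ∃ σ : Strategy G, ∀ τ : Strategy G, RelWins S 0 σ τ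

/-- Player 2 has a winning strategy for `REL(G,S)`. -/
def SecondWinsREL (S : Set G) : Prop :=
  ∃ τ : Strategy G, ∀ σ : Strategy G, RelWins S 1 σ τ

/-- Player 1 has a winning strategy for `RAV(G,S)`. -/
def FirstWinsRAV (S : Set G) : Prop :=
  ∃ σ : Strategy G, ∀ τ : Strategy G, RavWins S 0 σ τ

/-- Player 2 has a winning strategy for `RAV(G,S)`. -/
def SecondWinsRAV (S : Set G) : Prop :=
  ∃ τ : Strategy G, ∀ σ : Strategy G, RavWins S 1 σ τ

end RelatorGames

namespace RelatorGames

section Abstract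

variable {G : Type*} [Group G]

/-- Vertices visited by the word with history `h`. -/
def Vis (h : List G) : Set G := {g | ∃ t, t <:+ h ∧ eval t = g}

theorem eval_cons (m : G) (h : List G) : eval (m :: h) = eval h * m := by
  simp [eval]

theorem Vis_nil : Vis ([] : List G) = {1} := by
  ext g
  simp [Vis, eval, eq_comm]

theorem Vis_cons (m : G) (h : List G) : Vis (m :: h) = insert (eval h * m) (Vis h) := by
  ext g
  simp only [Vis, Set.mem_ofPred_eq, Set.mem_insert_iff, List.suffix_cons_iff]
  constructor
  · rintro ⟨t, rfl | ht, rfl⟩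
    · left; exact eval_cons m h
    · right; exact ⟨t, ht, rfl⟩
  · rintro (rfl | ⟨t, ht, rfl⟩)
    · exact ⟨m :: h, Or.inl rfl, eval_cons m h⟩
    · exact ⟨t, Or.inr ht, rfl⟩

/-- The first player, to move, can win within `k` of their moves; `V` is the visited set,
`g` the current vertex and `o` the last letter. -/
def W1 (S : Set G) : ℕ → Set G → G → Option G → Prop
  | 0, _, _, _ => False
  | k + 1, V, g, o => ∃ m, m ∈ letters S ∧ (∀ p ∈ o, m ≠ p⁻¹) ∧
      (g * m ∈ V ∨ ∀ m' ∈ letters S, m' ≠ m⁻¹ →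
        g * m * m' ∉ insert (g * m) V ∧
        W1 S k (insert (g * m * m') (insert (g * m) V)) (g * m * m') (some m'))

/-- The position with the second player to move is winning for the first player. -/
def W2 (S : Set G) (k : ℕ) (V : Set G) (g l : G) : Prop :=
  ∀ m ∈ letters S, m ≠ l⁻¹ → g * m ∉ V ∧ W1 S k (insert (g * m) V) (g * m) (some m)

theorem W1_close {S : Set G} {k : ℕ} {V : Set G} {g l : G} (m : G) (hm : m ∈ letters S)
    (hl : m ≠ l⁻¹) (hV : g * m ∈ V) (hk : 1 ≤ k) : W1 S k V g (some l) := by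
  obtain ⟨k, rfl⟩ := Nat.exists_eq_add_of_le' hk
  exact ⟨m, hm, by simpa using hl, Or.inl hV⟩

theorem W1_step {S : Set G} {k : ℕ} {V : Set G} {g l : G} (m : G) (hm : m ∈ letters S)
    (hl : m ≠ l⁻¹) (hV : W2 S k (insert (g * m) V) (g * m) m) : W1 S (k + 1) V g (some l) :=
  ⟨m, hm, by simpa using hl, Or.inr hV⟩

/-- Position reached by a history. -/
def WH (S : Set G) (k : ℕ) (h : List G) : Prop := W1 S k (Vis h) (eval h) h.head?

theorem WH_step {S : Set G} {k : ℕ} {h : List G} (H : WH S (k + 1) h) :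
    ∃ m, LegalMove S h m ∧ (ClosesCycle h m ∨ ∀ m', LegalMove S (m :: h) m' →
      ¬ ClosesCycle (m :: h) m' ∧ WH S k (m' :: m :: h)) := by
  obtain ⟨m, hm, hl, H⟩ := H
  refine ⟨m, ⟨hm, hl⟩, ?_⟩
  rcases H with H | H
  · left
    obtain ⟨t, ht, e⟩ := H
    exact ⟨t, ht, by rw [e, eval_cons]⟩
  · right
    intro m' ⟨hm', hl'⟩
    obtain ⟨h1, h2⟩ := H m' hm' (hl' m (by simp))
    constructor
    · rintro ⟨t, ht, e⟩
      apply h1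
      rw [← Vis_cons, ← eval_cons, ← eval_cons, ← e]
      exact ⟨t, ht, rfl⟩
    · have e : WH S k (m' :: m :: h) = W1 S k (Vis (m' :: m :: h)) (eval (m' :: m :: h)) (some m') := rfl
      rw [e, Vis_cons, Vis_cons, eval_cons, eval_cons, eval_cons]
      exact h2

open Classical in
/-- The strategy that realises the smallest winning rank. -/
noncomputable def strat (S : Set G) : Strategy G := fun h =>
  if H : ∃ k, WH S (k + 1) h then (WH_step (Nat.find_spec H)).choose else 1

theorem strat_spec {S : Set G} {k : ℕ} {h : List G} (H : WH S k h) :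
    ∃ k' < k, LegalMove S h (strat S h) ∧ (ClosesCycle h (strat S h) ∨
      ∀ m', LegalMove S (strat S h :: h) m' →
      ¬ ClosesCycle (strat S h :: h) m' ∧ WH S k' (m' :: strat S h :: h)) := by
  classical
  obtain _ | k := k
  · exact H.elim
  have H' : ∃ k, WH S (k + 1) h := ⟨k, H⟩
  refine ⟨Nat.find H', Nat.lt_succ_of_le (Nat.find_min' H' H), ?_⟩
  have := (WH_step (Nat.find_spec H')).choose_spec
  have e : strat S h = (WH_step (Nat.find_spec H')).choose := by
    simp only [strat, dif_pos H']
  rw [e]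
  exact this

theorem wins_aux (S : Set G) (τ : Strategy G) : ∀ k t : ℕ,
    (∀ j < 2 * t, Ok S (strat S) τ j) → WH S k (hist (strat S) τ (2 * t)) →
    RelWins S 0 (strat S) τ := by
  intro k
  induction k using Nat.strong_induction_on with
  | _ k ih =>
    intro t hok H
    obtain ⟨k', hk', hleg, H⟩ := strat_spec H
    have e0 : moveAt (strat S) τ (2 * t) = strat S (hist (strat S) τ (2 * t)) := by
      simp [moveAt]
    have e1 : hist (strat S) τ (2 * t + 1) =
        strat S (hist (strat S) τ (2 * t)) :: hist (strat S) τ (2 * t) := by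
      simp [hist]
    have e2 : hist (strat S) τ (2 * (t + 1)) =
        moveAt (strat S) τ (2 * t + 1) :: hist (strat S) τ (2 * t + 1) := by
      rw [show 2 * (t + 1) = (2 * t + 1) + 1 by ring]
      rw [hist, moveAt]
    by_cases hc : ClosesCycle (hist (strat S) τ (2 * t)) (strat S (hist (strat S) τ (2 * t)))
    · refine ⟨2 * t, hok, Or.inl ⟨by omega, ?_, ?_⟩⟩
      · rw [e0]; exact hleg
      · rw [e0]; exact hc
    · have H := H.resolve_left hc
      have hok1 : ∀ j < 2 * t + 1, Ok S (strat S) τ j := by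
        intro j hj
        rcases Nat.lt_succ_iff_lt_or_eq.mp hj with h | rfl
        · exact hok j h
        · refine ⟨?_, ?_⟩
          · rw [e0]; exact hleg
          · rw [e0]; exact hc
      by_cases hl : LegalMove S (hist (strat S) τ (2 * t + 1)) (moveAt (strat S) τ (2 * t + 1))
      · have h2 := H (moveAt (strat S) τ (2 * t + 1)) (by rw [← e1]; exact hl)
        rw [← e1, ← e2] at h2
        refine ih k' hk' (t + 1) ?_ h2.2
        intro j hj
        rcases Nat.lt_succ_iff_lt_or_eq.mp (show j < (2 * t + 1) + 1 by omega) with h | rfl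
        · exact hok1 j h
        · exact ⟨hl, h2.1⟩
      · exact ⟨2 * t + 1, hok1, Or.inr ⟨by omega, hl⟩⟩

theorem first_wins_of_W1 (S : Set G) (k : ℕ) (H : W1 S k {1} 1 none) : FirstWinsREL S := by
  refine ⟨strat S, fun τ => wins_aux S τ k 0 (by simp) ?_⟩
  simp only [hist, WH, Vis_nil]
  simpa [eval] using H

end Abstract

section Dic

open QuaternionGroup

variable {n : ℕ}

/-- The generating set. -/
abbrev SS (n : ℕ) : Set (QuaternionGroup n) := {a 1, xa 0}

/-- Torus coordinates: column `c`, height `y`; this is `a^c x^y`. -/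
def P (n : ℕ) (c y : ℤ) : QuaternionGroup n :=
  if y % 4 = 0 then a (c : ZMod (2 * n))
  else if y % 4 = 1 then xa (-(c : ZMod (2 * n)))
  else if y % 4 = 2 then a ((n : ZMod (2 * n)) + c)
  else xa ((n : ZMod (2 * n)) - c)

/-- The letter moving one column to the right at height `y`. -/
def R (n : ℕ) (y : ℤ) : QuaternionGroup n := if y % 2 = 0 then a 1 else a (-1)

/-- The vertical letters. -/
def X (n : ℕ) (s : ℤ) : QuaternionGroup n := if s = 1 then xa 0 else (xa 0)⁻¹

theorem two_n : (n : ZMod (2 * n)) + n = 0 := by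
  have : ((2 * n : ℕ) : ZMod (2 * n)) = 0 := ZMod.natCast_self _
  push_cast at this
  rw [← this]; ring

theorem neg_n : -(n : ZMod (2 * n)) = n := by
  rw [neg_eq_iff_add_eq_zero]; exact two_n

theorem mod4_cases (y : ℤ) : y % 4 = 0 ∨ y % 4 = 1 ∨ y % 4 = 2 ∨ y % 4 = 3 := by omega

theorem P_R (c y : ℤ) : P n c y * R n y = P n (c + 1) y := by
  rcases mod4_cases y with h | h | h | h
  · have h2 : y % 2 = 0 := by omega
    simp [P, R, h, h2]
  · have h2 : y % 2 = 1 := by omega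
    simp [P, R, h, h2]; ring
  · have h2 : y % 2 = 0 := by omega
    simp [P, R, h, h2]; ring
  · have h2 : y % 2 = 1 := by omega
    simp [P, R, h, h2]; ring

theorem P_L (c y : ℤ) : P n c y * (R n y)⁻¹ = P n (c - 1) y := by
  rw [mul_inv_eq_iff_eq_mul, P_R]; simp

theorem P_U (c y : ℤ) : P n c y * xa 0 = P n c (y + 1) := by
  have e := neg_n (n := n)
  have e2 := two_n (n := n)
  rcases mod4_cases y with h | h | h | h
  · have h2 : (y + 1) % 4 = 1 := by omega
    simp [P, h, h2]
  · have h2 : (y + 1) % 4 = 2 := by omega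
    simp [P, h, h2]
  · have h2 : (y + 1) % 4 = 3 := by omega
    simp [P, h, h2]; linear_combination e
  · have h2 : (y + 1) % 4 = 0 := by omega
    simp [P, h, h2]

theorem P_D (c y : ℤ) : P n c y * (xa 0)⁻¹ = P n c (y - 1) := by
  rw [mul_inv_eq_iff_eq_mul, P_U]; simp

theorem P_X (c y s : ℤ) (hs : s = 1 ∨ s = -1) : P n c y * X n s = P n c (y + s) := by
  rcases hs with rfl | rfl
  · simp only [X, if_true, P_U]
  · simp only [X]
    simp [P_D, sub_eq_add_neg]

theorem P_congr {c y c' y' : ℤ} (hc : c = c') (hy : 4 ∣ y - y') : P n c y = P n c' y' := by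
  have : y % 4 = y' % 4 := by omega
  subst hc
  simp [P, this]

theorem P_wrap (c y : ℤ) : P n (c + n) y = P n c (y + 2) := by
  have e := neg_n (n := n)
  have e2 := two_n (n := n)
  rcases mod4_cases y with h | h | h | h
  · have h2 : (y + 2) % 4 = 2 := by omega
    simp [P, h, h2]; ring
  · have h2 : (y + 2) % 4 = 3 := by omega
    simp [P, h, h2]; linear_combination e
  · have h2 : (y + 2) % 4 = 0 := by omega
    simp [P, h, h2]; linear_combination e2
  · have h2 : (y + 2) % 4 = 1 := by omega
    simp [P, h, h2]

theorem cast_eq {u v : ℤ} (h : (u : ZMod (2 * n)) = v) : ∃ k : ℤ, v - u = 2 * n * k := by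
  rw [ZMod.intCast_eq_intCast_iff_dvd_sub] at h
  obtain ⟨k, hk⟩ := h
  exact ⟨k, by push_cast at hk; exact hk⟩

theorem aux_same {N c c' k : ℤ} (h0 : 0 ≤ c) (h1 : c < N) (h0' : 0 ≤ c') (h1' : c' < N)
    (e : c' - c = 2 * N * k) : c = c' := by
  have : k = 0 := by
    by_contra hk
    rcases lt_or_gt_of_ne hk with h | h
    · nlinarith
    · nlinarith
  subst this; linarith

theorem aux_diff {N c c' k : ℤ} (h0 : 0 ≤ c) (h1 : c < N) (h0' : 0 ≤ c') (h1' : c' < N)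
    (e : c' - c + N = 2 * N * k) : False := by
  rcases le_or_gt k 0 with h | h
  · nlinarith
  · nlinarith

theorem P_inj {c y c' y' : ℤ} (h0 : 0 ≤ c) (h1 : c < n) (h0' : 0 ≤ c') (h1' : c' < n)
    (e : P n c y = P n c' y') : c = c' ∧ 4 ∣ y - y' := by
  have same : (c : ZMod (2 * n)) = c' → c = c' := fun h => by
    obtain ⟨k, hk⟩ := cast_eq h
    exact aux_same h0 h1 h0' h1' hk
  have diff : (c : ZMod (2 * n)) = n + c' → False := fun h => by
    have h : (c : ZMod (2 * n)) = ((c' + n : ℤ) : ZMod (2 * n)) := by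
      push_cast; rw [h]; ring
    obtain ⟨k, hk⟩ := cast_eq h
    exact aux_diff h0 h1 h0' h1' (k := k) (by linarith)
  have e1 := neg_n (n := n)
  have e2 := two_n (n := n)
  rcases mod4_cases y with h | h | h | h <;> rcases mod4_cases y' with h' | h' | h' | h' <;>
    simp [P, h, h'] at e
  · exact ⟨same e, by omega⟩
  · exact (diff e).elim
  · exact ⟨same e, by omega⟩
  · exact (diff (by linear_combination -e + e1)).elim
  · exact (diff (by linear_combination e - e2)).elim
  · exact ⟨same e, by omega⟩
  · exact (diff (by linear_combination -e)).elim
  · exact ⟨same e, by omega⟩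

theorem inv_a (i : ZMod (2 * n)) : (a i : QuaternionGroup n)⁻¹ = a (-i) := rfl

theorem inv_xa (i : ZMod (2 * n)) : (xa i : QuaternionGroup n)⁻¹ = xa ((n : ZMod (2 * n)) + i) := rfl

theorem R_mem (y : ℤ) : R n y ∈ letters (SS n) := by
  unfold R letters
  split_ifs <;> simp [inv_a, inv_xa]

theorem RI_mem (y : ℤ) : (R n y)⁻¹ ∈ letters (SS n) := by
  unfold R letters
  split_ifs <;> simp [inv_a, inv_xa]

theorem X_mem (s : ℤ) : X n s ∈ letters (SS n) := by
  unfold X letters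
  split_ifs <;> simp [inv_a, inv_xa]

theorem letters_cases {m : QuaternionGroup n} (h : m ∈ letters (SS n)) (y : ℤ) :
    m = R n y ∨ m = (R n y)⁻¹ ∨ m = X n 1 ∨ m = X n (-1) := by
  unfold letters at h
  unfold R X
  simp only [Set.mem_union, Set.mem_insert_iff, Set.mem_singleton_iff, Set.mem_image] at h
  rcases h with (rfl | rfl) | ⟨g, rfl | rfl, rfl⟩ <;> split_ifs <;> simp_all [inv_a, inv_xa]

theorem R_ne_XI (y s : ℤ) : R n y ≠ (X n s)⁻¹ := by
  unfold R X
  split_ifs <;> simp [inv_a, inv_xa]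

theorem X_ne_RI (y s : ℤ) : X n s ≠ (R n y)⁻¹ := by
  unfold R X
  split_ifs <;> simp [inv_a, inv_xa]

theorem X_ne_R (y s : ℤ) : X n s ≠ R n y := by
  unfold R X
  split_ifs <;> simp [inv_a, inv_xa]

theorem one_ne (hn : 3 ≤ n) : (1 : ZMod (2 * n)) ≠ -1 := by
  intro h
  have h : ((1 : ℤ) : ZMod (2 * n)) = ((-1 : ℤ) : ZMod (2 * n)) := by push_cast; exact h
  obtain ⟨k, hk⟩ := cast_eq h
  have : k ≠ 0 := by rintro rfl; simp at hk
  rcases lt_or_gt_of_ne this with h | h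
  · nlinarith
  · nlinarith

theorem n_ne (hn : 3 ≤ n) : (n : ZMod (2 * n)) ≠ 0 := by
  intro h
  have h : ((0 : ℤ) : ZMod (2 * n)) = ((n : ℤ) : ZMod (2 * n)) := by push_cast; exact h.symm
  obtain ⟨k, hk⟩ := cast_eq h
  exact aux_diff (N := n) (c := 0) (c' := 0) (k := k) le_rfl (by omega) le_rfl (by omega)
    (by linarith)

theorem R_ne_RI (hn : 3 ≤ n) (y : ℤ) : R n y ≠ (R n y)⁻¹ := by
  have := one_ne hn
  unfold R
  split_ifs
  · simpa [inv_a, inv_xa] using this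
  · simpa [inv_a, inv_xa] using this.symm

theorem X_ne_XI (hn : 3 ≤ n) (s : ℤ) : X n s ≠ (X n s)⁻¹ := by
  have := n_ne hn
  unfold X
  split_ifs
  · simpa [inv_a, inv_xa] using this.symm
  · simpa [inv_a, inv_xa] using this

theorem X_neg (s : ℤ) (hs : s = 1 ∨ s = -1) : X n (-s) = (X n s)⁻¹ := by
  rcases hs with rfl | rfl <;> simp [X]

theorem R_congr {y y' : ℤ} (h : 2 ∣ y - y') : R n y = R n y' := by
  have : y % 2 = y' % 2 := by omega
  simp [R, this]

/-- All answers of the second player after a move to the right. -/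
theorem W2_R {k : ℕ} {V : Set (QuaternionGroup n)} {c y : ℤ}
    (hR : P n (c + 1) y ∉ V ∧
      W1 (SS n) k (insert (P n (c + 1) y) V) (P n (c + 1) y) (some (R n y)))
    (hX : ∀ s : ℤ, (s = 1 ∨ s = -1) → P n c (y + s) ∉ V ∧
      W1 (SS n) k (insert (P n c (y + s)) V) (P n c (y + s)) (some (X n s))) :
    W2 (SS n) k V (P n c y) (R n y) := by
  intro m hm hne
  rcases letters_cases hm y with rfl | rfl | rfl | rfl
  · rw [P_R]; exact hR
  · exact absurd rfl hne
  · rw [P_X _ _ _ (Or.inl rfl)]; exact hX 1 (Or.inl rfl)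
  · rw [P_X _ _ _ (Or.inr rfl)]; exact hX (-1) (Or.inr rfl)

theorem W1_R {k : ℕ} {V : Set (QuaternionGroup n)} {c y : ℤ} {l : QuaternionGroup n}
    (hl : R n y ≠ l⁻¹) (H : W2 (SS n) k (insert (P n (c + 1) y) V) (P n (c + 1) y) (R n y)) :
    W1 (SS n) (k + 1) V (P n c y) (some l) := by
  apply W1_step (R n y) (R_mem y) hl
  rw [P_R]; exact H

theorem W1_closeR {k : ℕ} {V : Set (QuaternionGroup n)} {c y : ℤ} {l : QuaternionGroup n}
    (hk : 1 ≤ k) (hl : R n y ≠ l⁻¹) (H : P n (c + 1) y ∈ V) :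
    W1 (SS n) k V (P n c y) (some l) := by
  apply W1_close (R n y) (R_mem y) hl _ hk
  rw [P_R]; exact H

theorem W1_closeX {k : ℕ} {V : Set (QuaternionGroup n)} {c y : ℤ} {l : QuaternionGroup n}
    (s : ℤ) (hs : s = 1 ∨ s = -1)
    (hk : 1 ≤ k) (hl : X n s ≠ l⁻¹) (H : P n c (y + s) ∈ V) :
    W1 (SS n) k V (P n c y) (some l) := by
  apply W1_close (X n s) (X_mem s) hl _ hk
  rw [P_X _ _ _ hs]; exact H

theorem mem_of {V : Set (QuaternionGroup n)} {g : QuaternionGroup n} {c y c' y' : ℤ}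
    (h : P n c y ∈ V) (hc : c' = c) (hy : 4 ∣ y' - y) : P n c' y' ∈ insert g V := by
  rw [P_congr hc hy]
  exact Set.mem_insert_of_mem _ h

theorem mem_wrap {V : Set (QuaternionGroup n)} {g : QuaternionGroup n} {y c' y' : ℤ}
    (h : P n 0 y ∈ V) (hc : c' = n) (hy : 4 ∣ y' + 2 - y) : P n c' y' ∈ insert g V := by
  have : P n c' y' = P n 0 (y' + 2) := by
    rw [← P_wrap, zero_add, hc]
  rw [this]
  exact mem_of h rfl hy

/-- Ending at `(n - 1, 0)` reached by two moves to the right: the first player goes up. -/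
theorem E_win (hn : 3 ≤ n) {k : ℕ} (hk : 1 ≤ k) {V : Set (QuaternionGroup n)}
    (h00 : P n 0 0 ∈ V) (h2 : P n (n - 2) 0 ∈ V)
    (ub : ∀ v ∈ V, ∃ c y : ℤ, v = P n c y ∧ 0 ≤ c ∧ c < n ∧ (c = 0 → y = 0) ∧
      (c = n - 2 → y = 0) ∧ (c = n - 1 → y = 0 ∨ y = 1)) :
    W2 (SS n) k V (P n (n - 1) 1) (X n 1) := by
  have fresh : ∀ c y : ℤ, 0 ≤ c → c < n → (c = 0 → ¬ 4 ∣ y) → (c = n - 2 → ¬ 4 ∣ y) →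
      (c = n - 1 → ¬ 4 ∣ y ∧ ¬ 4 ∣ y - 1) → (c = 0 ∨ c = n - 2 ∨ c = n - 1) →
      P n c y ∉ V := by
    intro c y h0 h1 ha hb hc hd hv
    obtain ⟨c', y', e, h0', h1', h3, h4, h5⟩ := ub _ hv
    obtain ⟨rfl, hy⟩ := P_inj h0 h1 h0' h1' e
    omega
  intro m hm hne
  rcases letters_cases hm 1 with rfl | rfl | rfl | rfl
  · have e : P n (n - 1) 1 * R n 1 = P n 0 3 := by
      rw [P_R, show ((n : ℤ) - 1 + 1) = 0 + n by ring, P_wrap]; norm_num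
    rw [e]
    refine ⟨fresh _ _ (by omega) (by omega) (by omega) (by omega) (by omega) (by omega), ?_⟩
    exact W1_closeX 1 (Or.inl rfl) hk (X_ne_RI _ _) (mem_of h00 rfl (by norm_num))
  · rw [P_L]
    refine ⟨fresh _ _ (by omega) (by omega) (by omega) (by omega) (by omega) (by omega), ?_⟩
    refine W1_closeX (-1) (Or.inr rfl) hk ?_ (mem_of h2 (by ring) (by norm_num))
    rw [inv_inv]
    exact X_ne_R _ _
  · rw [P_X _ _ _ (Or.inl rfl)]
    refine ⟨fresh _ _ (by omega) (by omega) (by omega) (by omega) (by omega) (by omega), ?_⟩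
    exact W1_closeR hk (R_ne_XI _ _) (mem_wrap h00 (by ring) (by norm_num))
  · exact absurd (X_neg 1 (Or.inl rfl)) hne

/-- Final phase: following the initial straight segment at height two. -/
theorem F_win (hn : 3 ≤ n) {d e : ℤ} (hd : d % 2 = 1) (hdn : d < n) (he : e = 1 ∨ e = -1) :
    ∀ (k : ℕ) (j : ℤ) (V : Set (QuaternionGroup n)), j % 2 = 0 → 0 ≤ j → j < d → d - j ≤ k →
    (∀ i : ℤ, 0 ≤ i → i ≤ d → P n i 0 ∈ V) → P n d e ∈ V →
    (∀ v ∈ V, ∃ c y : ℤ, v = P n c y ∧ 0 ≤ c ∧ c < n ∧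
      (c < d → y = 0 ∨ (y = 2 ∧ c ≤ j)) ∧ (c = d → y = 0 ∨ y = e)) →
    W2 (SS n) k V (P n j 2) (R n 2) := by
  intro k
  induction k with
  | zero => intro j V _ _ h1 h2; omega
  | succ k ih =>
    intro j V hj h0 hjd hk lb hde ub
    have fresh : ∀ c y : ℤ, 0 ≤ c → c ≤ d → (c < d → ¬ 4 ∣ y ∧ (4 ∣ y - 2 → j < c)) →
        (c = d → ¬ 4 ∣ y ∧ ¬ 4 ∣ y - e) → P n c y ∉ V := by
      intro c y h0 h1 ha hb hv
      obtain ⟨c', y', e, h0', h1', h3, h4⟩ := ub _ hv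
      obtain ⟨rfl, hy⟩ := P_inj h0 (by omega) h0' h1' e
      omega
    apply W2_R
    · refine ⟨fresh _ _ (by omega) (by omega) (by omega) (by omega), ?_⟩
      by_cases hjd' : j + 1 = d
      · exact W1_closeX (-e) (by omega) (by omega) (X_ne_RI _ _) (mem_of hde hjd' (by omega))
      · apply W1_R (R_ne_RI hn _)
        apply ih (j + 1 + 1) _ (by omega) (by omega) (by omega) (by push_cast at hk; omega)
        · intro i hi hi'
          exact Set.mem_insert_of_mem _ (Set.mem_insert_of_mem _ (lb i hi hi'))
        · exact Set.mem_insert_of_mem _ (Set.mem_insert_of_mem _ hde)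
        · rintro v (rfl | rfl | hv)
          · exact ⟨_, _, rfl, by omega, by omega, by omega, by omega⟩
          · exact ⟨_, _, rfl, by omega, by omega, by omega, by omega⟩
          · obtain ⟨c, y, e, h0', h1', h3, h4⟩ := ub _ hv
            exact ⟨c, y, e, by omega, by omega, by omega, by omega⟩
    · intro s hs
      refine ⟨fresh _ _ (by omega) (by omega) (by omega) (by omega), ?_⟩
      exact W1_closeX s hs (by omega) (X_ne_XI hn _)
        (mem_of (lb j h0 (by omega)) rfl (by omega))

/-- Main phase after the first vertical move, which took place in column `d`. -/
theorem B1_win (hn : 3 ≤ n) (hodd : (n : ℤ) % 2 = 1) {d e : ℤ} (hd : d % 2 = 1) (hd0 : 0 ≤ d)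
    (he : e = 1 ∨ e = -1) :
    ∀ (k : ℕ) (c y : ℤ) (V : Set (QuaternionGroup n)), d < c → c < n → (c + y) % 2 = 1 →
    2 * n - c ≤ k →
    (∀ i : ℤ, 0 ≤ i → i ≤ d → P n i 0 ∈ V) → P n d e ∈ V → P n c y ∈ V →
    (∀ v ∈ V, ∃ c' y' : ℤ, v = P n c' y' ∧ 0 ≤ c' ∧ c' ≤ c ∧
      (c' < d → y' = 0) ∧ (c' = d → y' = 0 ∨ y' = e) ∧ (c' = c → y' = y)) →
    W2 (SS n) k V (P n c y) (R n y) := by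
  intro k
  induction k with
  | zero => intro c y V _ _ _ h; omega
  | succ k ih =>
    intro c y V hdc hcn hpar hk lb hde hcy ub
    have h00 : P n 0 0 ∈ V := lb 0 le_rfl hd0
    have fresh : ∀ c₁ y₁ : ℤ, 0 ≤ c₁ → c₁ < n → (c < c₁ ∨ (c₁ = c ∧ ¬ 4 ∣ y₁ - y) ∨
        (c₁ = 0 ∧ ¬ 4 ∣ y₁)) → P n c₁ y₁ ∉ V := by
      intro c₁ y₁ h0 h1 ha hv
      obtain ⟨c', y', e, h0', h1', h3, h4, h5⟩ := ub _ hv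
      obtain ⟨rfl, hy⟩ := P_inj h0 (by omega) h0' (by omega) e
      omega
    apply W2_R
    · by_cases hc1 : c = n - 1
      · have e : P n (c + 1) y = P n 0 (y + 2) := by
          rw [show c + 1 = 0 + n by omega, P_wrap]
        rw [e]
        refine ⟨fresh _ _ (by omega) (by omega) (by omega), ?_⟩
        by_cases hy : 4 ∣ y + 3
        · exact W1_closeX 1 (Or.inl rfl) (by omega) (X_ne_RI _ _) (mem_of h00 rfl (by omega))
        · exact W1_closeX (-1) (Or.inr rfl) (by omega) (X_ne_RI _ _)
            (mem_of h00 rfl (by omega))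
      · refine ⟨fresh _ _ (by omega) (by omega) (by omega), ?_⟩
        by_cases hc2 : c = n - 2
        · by_cases hy : 4 ∣ y
          · have e1 : P n (c + 1) y = P n (n - 1) 0 := P_congr (by omega) (by omega)
            rw [e1]
            apply W1_step (X n 1) (X_mem 1) (X_ne_RI _ _)
            rw [P_X _ _ _ (Or.inl rfl)]
            apply E_win hn (by omega)
            · exact Set.mem_insert_of_mem _ (Set.mem_insert_of_mem _ h00)
            · exact Set.mem_insert_of_mem _ (mem_of hcy (by omega) (by omega))
            · rintro v (rfl | rfl | hv)
              · exact ⟨_, _, rfl, by omega, by omega, by omega, by omega, by omega⟩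
              · exact ⟨_, _, rfl, by omega, by omega, by omega, by omega, by omega⟩
              · obtain ⟨c', y', e, h0', h1', h3, h4, h5⟩ := ub _ hv
                by_cases hcc : c' = c
                · refine ⟨c', 0, ?_, by omega, by omega, by omega, by omega, by omega⟩
                  rw [e]
                  exact P_congr rfl (by omega)
                · exact ⟨c', y', e, by omega, by omega, by omega, by omega, by omega⟩
          · exact W1_closeR (by omega) (R_ne_RI hn _) (mem_wrap h00 (by omega) (by omega))
        · apply W1_R (R_ne_RI hn _)
          apply ih (c + 1 + 1) _ _ (by omega) (by omega) (by omega) (by push_cast at hk; omega)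
          · intro i hi hi'
            exact Set.mem_insert_of_mem _ (Set.mem_insert_of_mem _ (lb i hi hi'))
          · exact Set.mem_insert_of_mem _ (Set.mem_insert_of_mem _ hde)
          · exact Set.mem_insert _ _
          · rintro v (rfl | rfl | hv)
            · exact ⟨_, _, rfl, by omega, by omega, by omega, by omega, by omega⟩
            · exact ⟨_, _, rfl, by omega, by omega, by omega, by omega, by omega⟩
            · obtain ⟨c', y', e, h0', h1', h3, h4, h5⟩ := ub _ hv
              exact ⟨c', y', e, by omega, by omega, by omega, by omega, by omega⟩
    · intro s hs
      refine ⟨fresh _ _ (by omega) (by omega) (by omega), ?_⟩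
      by_cases hc1 : c = n - 1
      · by_cases hy : 4 ∣ y + s
        · have e1 : P n c (y + s) = P n (n - 1) 0 := P_congr (by omega) (by omega)
          rw [e1]
          apply W1_R (R_ne_XI _ _)
          have e2 : P n ((n : ℤ) - 1 + 1) 0 = P n 0 2 := by
            rw [show (n : ℤ) - 1 + 1 = 0 + n by ring, P_wrap]; norm_num
          rw [e2, R_congr (n := n) (y := 0) (y' := 2) (by norm_num)]
          apply F_win hn hd (by omega) he k 0 _ (by omega) (by omega) (by omega)
            (by push_cast at hk; omega)
          · intro i hi hi'
            exact Set.mem_insert_of_mem _ (Set.mem_insert_of_mem _ (lb i hi hi'))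
          · exact Set.mem_insert_of_mem _ (Set.mem_insert_of_mem _ hde)
          · rintro v (rfl | rfl | hv)
            · exact ⟨_, _, rfl, by omega, by omega, by omega, by omega⟩
            · exact ⟨_, _, rfl, by omega, by omega, by omega, by omega⟩
            · obtain ⟨c', y', e, h0', h1', h3, h4, h5⟩ := ub _ hv
              exact ⟨c', y', e, by omega, by omega, by omega, by omega⟩
        · exact W1_closeR (by omega) (R_ne_XI _ _) (mem_wrap h00 (by omega) (by omega))
      · apply W1_R (R_ne_XI _ _)
        apply ih (c + 1) _ _ (by omega) (by omega) (by omega) (by push_cast at hk; omega)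
        · intro i hi hi'
          exact Set.mem_insert_of_mem _ (Set.mem_insert_of_mem _ (lb i hi hi'))
        · exact Set.mem_insert_of_mem _ (Set.mem_insert_of_mem _ hde)
        · exact Set.mem_insert _ _
        · rintro v (rfl | rfl | hv)
          · exact ⟨_, _, rfl, by omega, by omega, by omega, by omega, by omega⟩
          · exact ⟨_, _, rfl, by omega, by omega, by omega, by omega, by omega⟩
          · obtain ⟨c', y', e, h0', h1', h3, h4, h5⟩ := ub _ hv
            exact ⟨c', y', e, by omega, by omega, by omega, by omega, by omega⟩

/-- Opening phase: only moves to the right so far. -/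
theorem B0_win (hn : 3 ≤ n) (hodd : (n : ℤ) % 2 = 1) :
    ∀ (k : ℕ) (c : ℤ) (V : Set (QuaternionGroup n)), 0 ≤ c → c < n - 1 → c % 2 = 1 →
    2 * n - c ≤ k →
    (∀ i : ℤ, 0 ≤ i → i ≤ c → P n i 0 ∈ V) →
    (∀ v ∈ V, ∃ c' : ℤ, v = P n c' 0 ∧ 0 ≤ c' ∧ c' ≤ c) →
    W2 (SS n) k V (P n c 0) (R n 0) := by
  intro k
  induction k with
  | zero => intro c V _ _ _ h; omega
  | succ k ih =>
    intro c V hc0 hcn hpar hk lb ub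
    have fresh : ∀ c₁ y₁ : ℤ, 0 ≤ c₁ → c₁ < n → (c < c₁ ∨ ¬ 4 ∣ y₁) → P n c₁ y₁ ∉ V := by
      intro c₁ y₁ h0 h1 ha hv
      obtain ⟨c', e, h0', h1'⟩ := ub _ hv
      obtain ⟨rfl, hy⟩ := P_inj h0 (by omega) h0' (by omega) e
      omega
    apply W2_R
    · refine ⟨fresh _ _ (by omega) (by omega) (by omega), ?_⟩
      by_cases hc2 : c = n - 2
      · have e1 : P n (c + 1) 0 = P n (n - 1) 0 := P_congr (by omega) (by omega)
        rw [e1]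
        apply W1_step (X n 1) (X_mem 1) (X_ne_RI _ _)
        rw [P_X _ _ _ (Or.inl rfl)]
        apply E_win hn (by omega)
        · exact Set.mem_insert_of_mem _ (Set.mem_insert_of_mem _ (lb 0 le_rfl hc0))
        · exact Set.mem_insert_of_mem _ (mem_of (lb c hc0 le_rfl) (by omega) (by omega))
        · rintro v (rfl | rfl | hv)
          · exact ⟨_, _, rfl, by omega, by omega, by omega, by omega, by omega⟩
          · exact ⟨_, _, rfl, by omega, by omega, by omega, by omega, by omega⟩
          · obtain ⟨c', e, h0', h1'⟩ := ub _ hv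
            exact ⟨c', 0, e, by omega, by omega, by omega, by omega, by omega⟩
      · apply W1_R (R_ne_RI hn _)
        apply ih (c + 1 + 1) _ (by omega) (by omega) (by omega) (by push_cast at hk; omega)
        · intro i hi hi'
          by_cases h1 : i = c + 1 + 1
          · rw [h1]; exact Set.mem_insert _ _
          · by_cases h2 : i = c + 1
            · rw [h2]; exact Set.mem_insert_of_mem _ (Set.mem_insert _ _)
            · exact Set.mem_insert_of_mem _ (Set.mem_insert_of_mem _ (lb i hi (by omega)))
        · rintro v (rfl | rfl | hv)
          · exact ⟨_, rfl, by omega, by omega⟩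
          · exact ⟨_, rfl, by omega, by omega⟩
          · obtain ⟨c', e, h0', h1'⟩ := ub _ hv
            exact ⟨c', e, by omega, by omega⟩
    · intro s hs
      refine ⟨fresh _ _ (by omega) (by omega) (by omega), ?_⟩
      apply W1_R (R_ne_XI _ _)
      apply B1_win hn hodd (d := c) (e := s) (by omega) (by omega) hs k (c + 1) (0 + s) _
        (by omega) (by omega) (by omega) (by push_cast at hk; omega)
      · intro i hi hi'
        exact Set.mem_insert_of_mem _ (Set.mem_insert_of_mem _ (lb i hi hi'))
      · rw [zero_add]
        exact Set.mem_insert_of_mem _ (Set.mem_insert _ _)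
      · exact Set.mem_insert _ _
      · rintro v (rfl | rfl | hv)
        · exact ⟨_, _, rfl, by omega, by omega, by omega, by omega, by omega⟩
        · exact ⟨_, _, rfl, by omega, by omega, by omega, by omega, by omega⟩
        · obtain ⟨c', e, h0', h1'⟩ := ub _ hv
          exact ⟨c', 0, e, by omega, by omega, by omega, by omega, by omega⟩

theorem P_zero : P n 0 0 = 1 := by
  simp [P]

theorem first_wins (hn : 3 ≤ n) (hodd : (n : ℤ) % 2 = 1) : FirstWinsREL (SS n) := by
  apply first_wins_of_W1 (SS n) (2 * n + 1)
  refine ⟨R n 0, R_mem 0, by simp, Or.inr ?_⟩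
  rw [← P_zero, P_R]
  apply B0_win hn hodd (2 * n) (0 + 1) _ (by omega) (by omega) (by omega) (by push_cast; omega)
  · intro i hi hi'
    by_cases h1 : i = 0 + 1
    · rw [h1]; exact Set.mem_insert _ _
    · have : i = 0 := by omega
      rw [this]; exact Set.mem_insert_of_mem _ rfl
  · rintro v (rfl | rfl)
    · exact ⟨_, rfl, by omega, by omega⟩
    · exact ⟨_, rfl, by omega, by omega⟩

end Dic

end RelatorGames

open RelatorGames in
/-- For odd `n ≥ 3`, Player 1 has a winning strategy for
`REL(Dic_n, {a,x})`. -/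
theorem rel_dicyclic_odd_first_wins (n : ℕ) (hn : 3 ≤ n) (hodd : Odd n) :
    FirstWinsREL
      ({QuaternionGroup.a 1, QuaternionGroup.xa 0} : Set (QuaternionGroup n)) := by
  exact first_wins hn (by obtain ⟨k, rfl⟩ := hodd; push_cast; omega)
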